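/- Let n ≥ 4 and let φ : ℝⁿ → ℝⁿ be a continuous coherency preserver for the form q(x₁,…,xₙ) = xₙ² − (x₁² + ⋯ + x_{n−1}²). Assume there exist a ∈ ℝⁿ and a nonzero p ∈ ℝⁿ with q(p) = 0 such that φ is constant on the line {a + t·p : t ∈ ℝ}. Then φ is degenerate: its range is contained in 𝒞(φ(a)) = {m : q(m−φ(a)) = 0}. -/

import Mathlib

/-!
Put `x = m - a` and let `B` be the polar bilinear form of `mq n`. Since `p` is isotropic,
`q(x - t p) = q(x) - 2 t B(x, p)` is affine in `t`, so if `B(x, p) ≠ 0` the point `m` is coherent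
to some point `a + t p` of the line, whose image is `φ a`; hence `q(φ m - φ a) = 0`.
The form is nondegenerate and `p ≠ 0`, so the points with `B(x, p) ≠ 0` are dense, and continuity
of `φ` extends the conclusion to every `m`.
-/

/-- The standard Minkowski quadratic form
`q(x₁,…,xₙ) = xₙ² − (x₁² + ⋯ + x_{n−1}²)` on `ℝⁿ`. -/
noncomputable def mq (n : ℕ) (x : Fin n → ℝ) : ℝ :=
  ∑ i : Fin n, (if (i : ℕ) = n - 1 then (1 : ℝ) else -1) * x i ^ 2

/-- The polar bilinear form of `mq n`, normalised so that `mb n x x = mq n x`. -/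
noncomputable def mb (n : ℕ) (x y : Fin n → ℝ) : ℝ :=
  ∑ i : Fin n, (if (i : ℕ) = n - 1 then (1 : ℝ) else -1) * (x i * y i)

lemma mq_sub_smul (n : ℕ) (x p : Fin n → ℝ) (t : ℝ) :
    mq n (x - t • p) = mq n x - 2 * t * mb n x p + t ^ 2 * mq n p := by
  simp only [mq, mb, Finset.mul_sum, ← Finset.sum_sub_distrib, ← Finset.sum_add_distrib]
  refine Finset.sum_congr rfl fun i _ => ?_
  simp only [Pi.sub_apply, Pi.smul_apply, smul_eq_mul]
  ring

lemma mb_add_smul (n : ℕ) (x v p : Fin n → ℝ) (s : ℝ) :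
    mb n (x + s • v) p = mb n x p + s * mb n v p := by
  simp only [mb, Finset.mul_sum, ← Finset.sum_add_distrib]
  refine Finset.sum_congr rfl fun i _ => ?_
  simp only [Pi.add_apply, Pi.smul_apply, smul_eq_mul]
  ring

lemma exists_mb_ne_zero (n : ℕ) (p : Fin n → ℝ) (hp : p ≠ 0) : ∃ v, mb n v p ≠ 0 := by
  obtain ⟨i, hi⟩ := Function.ne_iff.mp hp
  refine ⟨Pi.single i 1, ?_⟩
  rw [mb, Finset.sum_eq_single i]
  · have hi' : p i ≠ 0 := hi
    split_ifs <;> simpa using hi'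
  · intro j _ hj
    simp [Pi.single_eq_of_ne hj]
  · simp

lemma continuous_mq (n : ℕ) : Continuous (mq n) := by
  unfold mq
  fun_prop

theorem coherency_preserver_constant_on_coherent_line_is_degenerate
    (n : ℕ) (hn : 4 ≤ n) (φ : (Fin n → ℝ) → (Fin n → ℝ))
    (hcont : Continuous φ)
    (hpres : ∀ a b : Fin n → ℝ, mq n (b - a) = 0 → mq n (φ b - φ a) = 0)
    (a p : Fin n → ℝ) (hp : p ≠ 0) (hqp : mq n p = 0)
    (hconst : ∀ t : ℝ, φ (a + t • p) = φ a) :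
    ∀ m : Fin n → ℝ, mq n (φ m - φ a) = 0 := by
  -- Off the hyperplane `mb n (m - a) p = 0`, the point `m` is coherent to a point of the line.
  have key : ∀ m, mb n (m - a) p ≠ 0 → mq n (φ m - φ a) = 0 := by
    intro m hm
    set t := mq n (m - a) / (2 * mb n (m - a) p) with ht
    rw [← hconst t]
    apply hpres
    rw [← sub_sub, mq_sub_smul, hqp, ht]
    field_simp
    ring
  intro m
  obtain ⟨v, hv⟩ := exists_mb_ne_zero n p hp
  -- The line `s ↦ m + s v` meets that hyperplane in exactly one parameter `s₀`.
  set s₀ := -mb n (m - a) p / mb n v p with hs₀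
  have hf : Continuous fun s : ℝ => mq n (φ (m + s • v) - φ a) :=
    (continuous_mq n).comp ((hcont.comp (by fun_prop)).sub continuous_const)
  have hzero : (fun s : ℝ => mq n (φ (m + s • v) - φ a)) = fun _ => 0 := by
    refine hf.ext_on (dense_compl_singleton s₀) continuous_const fun s hs => ?_
    apply key
    rw [add_sub_right_comm, mb_add_smul]
    intro h
    apply hs
    rw [Set.mem_singleton_iff, hs₀, eq_div_iff hv]
    linarith
  simpa using congrFun hzero 0
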